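/- Let p be a probability distribution on a finite set S of size |S| ≥ 2, and let m = max_s p(s) denote its largest value. Then the Shannon entropy satisfies H(p) ≤ m·(-log m) + (1 - m)·log((|S| - 1)/(1 - m)) when m < 1, i.e., the entropy is maximized, given the maximal mass m, by spreading the remaining mass uniformly over the other |S| - 1 elements. -/

import Mathlib

noncomputable def shannonEntropy {X : Type*} [Fintype X] (p : X → ℝ) : ℝ :=
  -∑ x, p x * Real.log (p x)

theorem entropy_le_maxMass_bound {S : Type*} [Fintype S] [Nonempty S] (p : S → ℝ)
    (hp0 : ∀ s, 0 ≤ p s) (hp1 : ∑ s, p s = 1)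
    (hcard : 2 ≤ Fintype.card S)
    (m : ℝ) (hm : m = Finset.univ.sup' Finset.univ_nonempty p)
    (hm0 : 0 < m) (hm1 : m < 1) :
    shannonEntropy p ≤
      m * (-Real.log m) +
        (1 - m) * Real.log ((Fintype.card S - 1) / (1 - m)) := by
  classical
  obtain ⟨a, -, ha⟩ := Finset.exists_mem_eq_sup' (Finset.univ_nonempty (α := S)) p
  have hma : p a = m := by rw [hm, ha]
  have hn : (0 : ℝ) < (Fintype.card S : ℝ) - 1 := by
    have : (2 : ℝ) ≤ Fintype.card S := by exact_mod_cast hcard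
    linarith
  have hr : 0 < 1 - m := by linarith
  set L := Real.log (((Fintype.card S : ℝ) - 1) / (1 - m)) with hL
  set q := (1 - m) / ((Fintype.card S : ℝ) - 1) with hq
  have hq0 : 0 < q := div_pos hr hn
  have hLq : Real.log q = -L := by
    rw [hL, hq, ← Real.log_inv, inv_div]
  have key : ∀ s, -(p s * Real.log (p s)) ≤ p s * L + q - p s := by
    intro s
    rcases (hp0 s).eq_or_lt with h | h
    · rw [← h]; simp [hq0.le]
    · have h1 := Real.log_le_sub_one_of_pos (div_pos hq0 h)
      rw [Real.log_div hq0.ne' h.ne', hLq] at h1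
      have h2 := mul_le_mul_of_nonneg_left h1 h.le
      have h3 : p s * (q / p s - 1) = q - p s := by field_simp
      rw [h3] at h2
      linarith
  have hs : ∑ s ∈ Finset.univ.erase a, p s = 1 - m := by
    have := Finset.add_sum_erase Finset.univ p (Finset.mem_univ a)
    linarith
  have hsum := Finset.sum_le_sum (fun s (_ : s ∈ Finset.univ.erase a) => key s)
  have hc : ((Finset.univ.erase a).card : ℝ) = (Fintype.card S : ℝ) - 1 := by
    rw [Finset.card_erase_of_mem (Finset.mem_univ a), Finset.card_univ,
      Nat.cast_sub (by omega), Nat.cast_one]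
  have hnq : ((Fintype.card S : ℝ) - 1) * q = 1 - m := by
    rw [hq]; field_simp
  rw [Finset.sum_sub_distrib, Finset.sum_add_distrib, ← Finset.sum_mul, hs,
    Finset.sum_const, nsmul_eq_mul, hc, hnq, Finset.sum_neg_distrib] at hsum
  have h := Finset.add_sum_erase Finset.univ (fun s => p s * Real.log (p s)) (Finset.mem_univ a)
  simp only [hma] at h
  unfold shannonEntropy
  rw [← h]
  linarith
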